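/- arXiv:2501.11565 — 8 statements merged into one kernel-verified Lean document; each statement's English description precedes it below -/
import Mathlib

section
/- Let x ∈ ℝ³ \ {0} and let u : ℝ³ → ℝ³ be differentiable at ι(x) = x/|x|². Then u∘ι is differentiable at x with Jacobian D(u∘ι)(x) = (1/|x|²)·Du(ι(x))·A(x), where A(x) = I₃ − 2·x xᵀ/|x|²; consequently the squared Frobenius norms satisfy ‖D(u∘ι)(x)‖² = ‖Du(ι(x))‖²/|x|⁴. -/
noncomputable section

open Real

/-- `ℝ³` with the Euclidean norm. -/
abbrev E3 := EuclideanSpace ℝ (Fin 3)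

/-- Jacobian matrix of a map `f : ℝ³ → ℝ³` at `x`. -/
def jac (f : E3 → E3) (x : E3) : Matrix (Fin 3) (Fin 3) ℝ :=
  Matrix.of fun i j => fderiv ℝ f x (EuclideanSpace.single j 1) i

/-- Squared Frobenius norm of the Jacobian of `f` at `x`. -/
def frobSq (f : E3 → E3) (x : E3) : ℝ := ∑ i, ∑ j, (jac f x i j) ^ 2

/-- Inversion about the unit sphere, `ι(x) = x / |x|²`. -/
def sphereInv (x : E3) : E3 := (‖x‖ ^ 2)⁻¹ • x

/-- The matrix `A(x) = I₃ − 2 x xᵀ / |x|²`. -/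
def Amat (x : E3) : Matrix (Fin 3) (Fin 3) ℝ :=
  Matrix.of fun i j => (if i = j then (1 : ℝ) else 0) - 2 * x i * x j / ‖x‖ ^ 2

theorem hasFDerivAt_sphereInv (x : E3) (hx : x ≠ 0) :
    HasFDerivAt sphereInv ((‖x‖ ^ 2)⁻¹ • ContinuousLinearMap.id ℝ E3 +
      (-((‖x‖ ^ 2) ^ 2)⁻¹ • ((2 : ℝ) • innerSL ℝ x)).smulRight x) x := by
  have h0 : ‖x‖ ^ 2 ≠ 0 := by positivity
  have h1 : HasFDerivAt (fun y : E3 => ‖y‖ ^ 2) ((2 : ℝ) • innerSL ℝ x) x := by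
    have := (hasStrictFDerivAt_norm_sq x).hasFDerivAt
    rw [two_smul] at this ⊢
    exact this
  have h2 := (hasDerivAt_inv h0).comp_hasFDerivAt x h1
  exact h2.smul (hasFDerivAt_id x)

theorem row_identity (N a b c p q r : ℝ) (hN : N ≠ 0) (h : N = a ^ 2 + b ^ 2 + c ^ 2) :
    (N⁻¹ * (p * (1 - 2 * a * a / N) + q * (0 - 2 * b * a / N) + r * (0 - 2 * c * a / N))) ^ 2
    + (N⁻¹ * (p * (0 - 2 * a * b / N) + q * (1 - 2 * b * b / N) + r * (0 - 2 * c * b / N))) ^ 2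
    + (N⁻¹ * (p * (0 - 2 * a * c / N) + q * (0 - 2 * b * c / N) + r * (1 - 2 * c * c / N))) ^ 2
    = (p ^ 2 + q ^ 2 + r ^ 2) / N ^ 2 := by
  field_simp
  subst h
  ring

/-- If `u` is differentiable at `ι(x)`, then `u ∘ ι` is differentiable at `x`
with Jacobian `(1/|x|²) Du(ι(x)) A(x)`, and the squared Frobenius norms
satisfy `‖D(u∘ι)(x)‖² = ‖Du(ι(x))‖² / |x|⁴`. -/
theorem jacobian_comp_sphereInv (x : E3) (hx : x ≠ 0) (u : E3 → E3)
    (hu : DifferentiableAt ℝ u (sphereInv x)) :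
    DifferentiableAt ℝ (u ∘ sphereInv) x ∧
    jac (u ∘ sphereInv) x = (‖x‖ ^ 2)⁻¹ • (jac u (sphereInv x) * Amat x) ∧
    frobSq (u ∘ sphereInv) x = frobSq u (sphereInv x) / ‖x‖ ^ 4 := by
  have hd := hasFDerivAt_sphereInv x hx
  have hc := hu.hasFDerivAt.comp x hd
  have hj : jac (u ∘ sphereInv) x = (‖x‖ ^ 2)⁻¹ • (jac u (sphereInv x) * Amat x) := by
    have hN : ‖x‖ ≠ 0 := by positivity
    ext i j
    have key : ∀ v : E3, fderiv ℝ u (sphereInv x) v i =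
        ∑ k, jac u (sphereInv x) i k * v k := by
      intro v
      have hv : v = ∑ k, v k • EuclideanSpace.single k (1 : ℝ) := by
        ext l
        fin_cases l <;> simp [Fin.sum_univ_three]
      conv_lhs => rw [hv]
      simp [jac, Fin.sum_univ_three, mul_comm]
    rw [Matrix.smul_apply, Matrix.mul_apply]
    simp only [jac, Matrix.of_apply]
    rw [hc.fderiv, ContinuousLinearMap.comp_apply, key, smul_eq_mul, Finset.mul_sum]
    refine Finset.sum_congr rfl fun k _ => ?_
    simp only [jac, Amat, Matrix.of_apply]
    rw [mul_left_comm]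
    congr 1
    simp [EuclideanSpace.inner_single_right]
    split_ifs <;> field_simp <;> ring
  refine ⟨hc.differentiableAt, hj, ?_⟩
  have hN : ‖x‖ ^ 2 ≠ 0 := by positivity
  have hx2 : ‖x‖ ^ 2 = x 0 ^ 2 + x 1 ^ 2 + x 2 ^ 2 := by
    rw [EuclideanSpace.real_norm_sq_eq, Fin.sum_univ_three]
  unfold frobSq
  rw [hj, Finset.sum_div]
  refine Finset.sum_congr rfl fun i _ => ?_
  have := row_identity (‖x‖ ^ 2) (x 0) (x 1) (x 2) (jac u (sphereInv x) i 0)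
    (jac u (sphereInv x) i 1) (jac u (sphereInv x) i 2) hN hx2
  rw [show ‖x‖ ^ 4 = (‖x‖ ^ 2) ^ 2 by ring]
  simp only [Fin.sum_univ_three, Matrix.smul_apply, Matrix.mul_apply, smul_eq_mul]
  rw [← this]
  simp [Amat]
end
end

section
/- Let u : ℝ³ → ℝ³ be continuously differentiable on a neighborhood of the closed annulus {1/2 ≤ |x| ≤ 1} and satisfy |u(x)| = 1 for all x in that annulus. Define ũ(x) := A(x)·u(x/|x|²) for 1 ≤ |x| ≤ 2. Then (1/2)∫_{1/2<|x|<1} ‖Du(x)‖² dx = 4π + (1/2)∫_{1<|x|<2} (1/|x|²)·[ ‖Dũ(x)‖² + (4/|x|⁴)·(ũ(x)·x)² + (4/|x|²)·Σ_{i,j=1}^{3} x_i · (∂_j ũ_i(x)) · ũ_j(x) − (4/|x|²)·(ũ(x)·x)·div ũ(x) ] dx. -/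
noncomputable section

open Real MeasureTheory

def toE3 (v : Fin 3 → ℝ) : E3 := (EuclideanSpace.equiv (Fin 3) ℝ).symm v

/-- Euclidean dot product on `ℝ³`. -/
def dot3 (v w : E3) : ℝ := ∑ i, v i * w i

/-- Divergence of `f : ℝ³ → ℝ³` at `x` (trace of the Jacobian). -/
def div3 (f : E3 → E3) (x : E3) : ℝ := ∑ i, jac f x i i

/-- The extension by spherical reflection, `ũ(x) = A(x) · u(x/|x|²)`. -/
def sphRefl (u : E3 → E3) (x : E3) : E3 :=
  toE3 fun i => ∑ j, Amat x i j * u (sphereInv x) j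

def invDeriv (x : E3) : E3 →L[ℝ] E3 :=
  (‖x‖ ^ 2)⁻¹ • ((ℝ ∙ x)ᗮ.reflection : E3 →L[ℝ] E3)

lemma sphereInv_eq : sphereInv = EuclideanGeometry.inversion (0 : E3) 1 := by
  funext x
  simp [sphereInv, EuclideanGeometry.inversion]

lemma sphereInv_hasFDerivAt (x : E3) (hx : x ≠ 0) :
    HasFDerivAt sphereInv (invDeriv x) x := by
  have h := EuclideanGeometry.hasFDerivAt_inversion (c := (0 : E3)) (R := 1) hx
  rw [sphereInv_eq]
  have e : invDeriv x = ((1 / dist x 0) ^ 2 •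
      ((ℝ ∙ (x - 0))ᗮ.reflection : E3 →L[ℝ] E3)) := by
    rw [sub_zero, dist_zero_right, one_div, inv_pow]; rfl
  rw [e]
  exact h

lemma invDeriv_det (x : E3) : |(invDeriv x).det| = (‖x‖ ^ 6)⁻¹ := by
  have h : (invDeriv x).det
      = LinearMap.det ((‖x‖ ^ 2)⁻¹ • (ℝ ∙ x)ᗮ.reflection.toLinearMap) := rfl
  rw [h, LinearMap.det_smul, Submodule.det_reflection]
  simp [abs_mul, abs_pow]
  ring

lemma invDeriv_apply (x v : E3) (i : Fin 3) :
    invDeriv x v i = (‖x‖ ^ 2)⁻¹ * (v i - 2 * (inner ℝ x v / ‖x‖ ^ 2) * x i) := by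
  have : invDeriv x v = (‖x‖ ^ 2)⁻¹ • ((ℝ ∙ x)ᗮ.reflection v) := rfl
  rw [this, Submodule.reflection_orthogonal_apply, Submodule.reflection_singleton_apply]
  simp only [PiLp.smul_apply, PiLp.neg_apply, PiLp.sub_apply, smul_eq_mul, nsmul_eq_mul]
  simp only [RCLike.ofReal_real_eq_id, id]
  push_cast
  ring

lemma norm_sphereInv (x : E3) : ‖sphereInv x‖ = ‖x‖⁻¹ := by
  have := EuclideanGeometry.dist_inversion_center (0 : E3) x 1
  rw [sphereInv_eq]
  simpa using this

lemma sphereInv_sphereInv (x : E3) : sphereInv (sphereInv x) = x := by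
  rw [sphereInv_eq]; exact EuclideanGeometry.inversion_inversion _ one_ne_zero x

lemma image_annulus :
    sphereInv '' {x : E3 | 1 < ‖x‖ ∧ ‖x‖ < 2} = {x : E3 | 1 / 2 < ‖x‖ ∧ ‖x‖ < 1} := by
  have key : ∀ r : ℝ, 0 < r → ((1 / 2 < r⁻¹ ∧ r⁻¹ < 1) ↔ (1 < r ∧ r < 2)) := by
    intro r hr
    rw [inv_lt_one₀ hr, one_div, inv_lt_inv₀ two_pos hr]
    tauto
  ext y
  simp only [Set.mem_image, Set.mem_ofPred_eq]
  constructor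
  · rintro ⟨x, hx, rfl⟩
    rw [norm_sphereInv]
    exact (key _ (by linarith [hx.1])).2 hx
  · intro hy
    refine ⟨sphereInv y, ?_, sphereInv_sphereInv y⟩
    have hp : 0 < ‖y‖ := by linarith [hy.1]
    rw [norm_sphereInv, ← key _ (by positivity), inv_inv]
    exact hy

lemma radial_integral :
    ∫ x in {x : E3 | 1 < ‖x‖ ∧ ‖x‖ < 2}, (4 / ‖x‖ ^ 4 : ℝ) = 8 * π := by
  have hm : MeasurableSet {x : E3 | 1 < ‖x‖ ∧ ‖x‖ < 2} :=
    (measurableSet_lt measurable_const measurable_norm).inter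
      (measurableSet_lt measurable_norm measurable_const)
  rw [← integral_indicator hm]
  have h1 : ({x : E3 | 1 < ‖x‖ ∧ ‖x‖ < 2}.indicator fun x => (4 / ‖x‖ ^ 4 : ℝ))
      = fun x : E3 => (Set.Ioo (1:ℝ) 2).indicator (fun r => 4 / r ^ 4) ‖x‖ := by
    funext x
    simp [Set.indicator, Set.mem_Ioo]
  rw [h1, integral_fun_norm_addHaar]
  have h2 : ∀ y : ℝ, y ^ (Module.finrank ℝ E3 - 1) •
      (Set.Ioo (1:ℝ) 2).indicator (fun r => 4 / r ^ 4) y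
      = (Set.Ioo (1:ℝ) 2).indicator (fun r => 4 * r ^ (-2 : ℤ)) y := by
    intro y
    by_cases hy : y ∈ Set.Ioo (1:ℝ) 2
    · have : y ≠ 0 := by linarith [hy.1, (show (0:ℝ) < 1 by norm_num), hy.1] |> ne_of_gt
      simp [hy, zpow_neg]
      field_simp
    · simp [hy]
  simp_rw [h2]
  rw [setIntegral_indicator measurableSet_Ioo]
  have h3 : Set.Ioi (0:ℝ) ∩ Set.Ioo 1 2 = Set.Ioo 1 2 := by
    ext y; simp; intro h _; linarith
  rw [h3, ← integral_Ioc_eq_integral_Ioo, ← intervalIntegral.integral_of_le (by norm_num),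
    intervalIntegral.integral_const_mul, integral_zpow (by right; simp)]
  rw [Measure.real, EuclideanSpace.volume_ball_fin_three]
  have : (0:ℝ) ≤ π * 4 / 3 := by positivity
  simp [ENNReal.toReal_ofReal this]
  norm_num
  ring

lemma alg_identity (a V : Fin 3 → Fin 3 → ℝ) (x w v : Fin 3 → ℝ) (s : ℝ) (hs : s ≠ 0)
    (hx : ∑ i, x i ^ 2 = s) (hw : ∑ i, w i ^ 2 = 1)
    (hv : ∀ i, v i = w i - 2 * s⁻¹ * (∑ k, x k * w k) * x i)
    (hV : ∀ i j, V i j = a i j + (if i = j then 1 else 0) * (-2 * s⁻¹ * ∑ k, x k * w k)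
      + x i * (-2 * s⁻¹ * (w j + ∑ k, x k * a k j) + 4 * s⁻¹ ^ 2 * (∑ k, x k * w k) * x j)) :
    (∑ i, ∑ j, V i j ^ 2) + (4 / s ^ 2) * (∑ i, v i * x i) ^ 2
      + (4 / s) * (∑ i, ∑ j, x i * V i j * v j)
      - (4 / s) * (∑ i, v i * x i) * (∑ i, V i i)
    = (∑ i, ∑ j, a i j ^ 2) - 4 / s := by
  obtain ⟨t, ht⟩ : ∃ t, t = s⁻¹ := ⟨_, rfl⟩
  obtain ⟨d, hd⟩ : ∃ d, d = ∑ k, x k * w k := ⟨_, rfl⟩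
  obtain ⟨c, hc⟩ : ∃ c : Fin 3 → ℝ, ∀ j, c j = ∑ k, x k * a k j := ⟨_, fun _ => rfl⟩
  obtain ⟨β, hβ⟩ : ∃ β : Fin 3 → ℝ, ∀ j, β j = -2 * t * (w j + c j) + 4 * t ^ 2 * d * x j :=
    ⟨_, fun _ => rfl⟩
  obtain ⟨α, hα⟩ : ∃ α, α = -2 * t * d := ⟨_, rfl⟩
  have hst : s * t = 1 := by rw [ht]; field_simp
  have hV' : ∀ i j, V i j = a i j + (if i = j then 1 else 0) * α + x i * β j := by
    intro i j
    rw [hV, hβ, hα, hc, ht, hd]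
  have hv' : ∀ i, v i = w i - 2 * t * d * x i := by
    intro i; rw [hv, ht, hd]
  have e1 : ∑ i, ∑ j, V i j ^ 2 = (∑ i, ∑ j, a i j ^ 2) + 3 * α ^ 2 + s * (∑ j, β j ^ 2)
      + 2 * α * (∑ i, a i i) + 2 * (∑ j, c j * β j) + 2 * α * (∑ j, x j * β j) := by
    simp only [hV', hc, ← hx, Fin.sum_univ_three]
    simp
    ring
  have e2 : ∑ i, V i i = (∑ i, a i i) + 3 * α + ∑ j, x j * β j := by
    simp only [hV', Fin.sum_univ_three]
    simp
    ring
  have e3 : ∑ i, ∑ j, x i * V i j * v j = ∑ j, (c j + x j * α + s * β j) * v j := by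
    simp only [hV', hc, ← hx, Fin.sum_univ_three]
    simp
    ring
  obtain ⟨e, he⟩ : ∃ e, e = ∑ k, x k * c k := ⟨_, rfl⟩
  obtain ⟨q, hq⟩ : ∃ q, q = ∑ k, c k ^ 2 := ⟨_, rfl⟩
  obtain ⟨p, hp⟩ : ∃ p, p = ∑ k, w k * c k := ⟨_, rfl⟩
  have f1 : ∑ j, β j ^ 2 = 4 * t ^ 2 * (1 + 2 * p + q) + 16 * t ^ 4 * d ^ 2 * s
      - 16 * t ^ 3 * d * (d + e) := by
    rw [hp, hq, he, ← hw, ← hx]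
    simp only [hβ, Fin.sum_univ_three]
    rw [hd, Fin.sum_univ_three]
    ring
  have f2 : ∑ j, c j * β j = -2 * t * (p + q) + 4 * t ^ 2 * d * e := by
    rw [hp, hq, he]
    simp only [hβ, Fin.sum_univ_three]
    ring
  have f3 : ∑ j, x j * β j = -2 * t * (d + e) + 4 * t ^ 2 * d * s := by
    rw [he, ← hx]
    simp only [hβ, Fin.sum_univ_three]
    rw [hd, Fin.sum_univ_three]
    ring
  have f4 : ∑ i, v i * x i = d - 2 * t * d * s := by
    rw [← hx]
    simp only [hv', Fin.sum_univ_three]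
    rw [hd, Fin.sum_univ_three]
    ring
  have f5 : ∑ j, β j * w j = -2 * t * (1 + p) + 4 * t ^ 2 * d * d := by
    rw [hp, ← hw]
    simp only [hβ, Fin.sum_univ_three]
    rw [hd, Fin.sum_univ_three]
    ring
  have f6 : ∑ j, (c j + x j * α + s * β j) * v j = p - 2 * t * d * e + α * (d - 2 * t * d * s)
      + s * ((∑ j, β j * w j) - 2 * t * d * ∑ j, x j * β j) := by
    rw [← f4, hp, he]
    simp only [hv', Fin.sum_univ_three]
    ring
  rw [e1, e2, e3, f6, f5, f4, f3, f2, f1, hα, ht]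
  field_simp
  ring

lemma frob_alg (B : Fin 3 → Fin 3 → ℝ) (x : Fin 3 → ℝ) (r : ℝ) (hr : r ≠ 0)
    (hx : ∑ i, x i ^ 2 = r ^ 2) :
    ∑ i, ∑ j, ((r ^ 2)⁻¹ * (B i j - 2 * (r ^ 2)⁻¹ * x j * ∑ k, B i k * x k)) ^ 2
      = (r ^ 4)⁻¹ * ∑ i, ∑ j, B i j ^ 2 := by
  rw [Finset.mul_sum]
  refine Finset.sum_congr rfl fun i _ => ?_
  obtain ⟨t, ht⟩ : ∃ t, t = (r ^ 2)⁻¹ := ⟨_, rfl⟩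
  obtain ⟨m, hm⟩ : ∃ m, m = ∑ k, B i k * x k := ⟨_, rfl⟩
  have h4 : (r ^ 4)⁻¹ = t ^ 2 := by rw [ht]; field_simp
  have hst : r ^ 2 * t = 1 := by rw [ht]; field_simp
  rw [← ht, ← hm, h4]
  rw [Fin.sum_univ_three] at hx hm
  simp only [Fin.sum_univ_three]
  linear_combination (4 * t ^ 4 * m ^ 2) * hx + 4 * t ^ 3 * m * hm + 4 * t ^ 3 * m ^ 2 * hst

lemma sphRefl_eq (u : E3 → E3) : sphRefl u = fun y =>
    u (sphereInv y) - (2 * ((‖y‖ ^ 2)⁻¹ * inner ℝ y (u (sphereInv y)))) • y := by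
  funext y
  ext i
  simp only [sphRefl, toE3, Amat, PiLp.inner_apply, Fin.sum_univ_three]
  fin_cases i <;> simp <;> ring

lemma pointwise (u : E3 → E3) (x : E3) (hx : x ≠ 0)
    (hd : DifferentiableAt ℝ u (sphereInv x)) (hn : ‖u (sphereInv x)‖ = 1) :
    |(invDeriv x).det| • frobSq u (sphereInv x) =
      (1 / ‖x‖ ^ 2) *
          (frobSq (sphRefl u) x
            + (4 / ‖x‖ ^ 4) * (dot3 (sphRefl u x) x) ^ 2
            + (4 / ‖x‖ ^ 2) * ∑ i, ∑ j, x i * (jac (sphRefl u) x i j) * sphRefl u x j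
            - (4 / ‖x‖ ^ 2) * dot3 (sphRefl u x) x * div3 (sphRefl u) x) + 4 / ‖x‖ ^ 4 := by
  have hx0 : ‖x‖ ≠ 0 := norm_ne_zero_iff.2 hx
  have hs0 : ‖x‖ ^ 2 ≠ 0 := pow_ne_zero _ hx0
  set L := (fderiv ℝ u (sphereInv x)).comp (invDeriv x) with hL
  have hw : HasFDerivAt (fun y => u (sphereInv y)) L x :=
    hd.hasFDerivAt.comp x (sphereInv_hasFDerivAt x hx)
  have hid := hasFDerivAt_id (𝕜 := ℝ) x
  have hinv := (hasDerivAt_inv hs0).comp_hasFDerivAt x hid.norm_sq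
  have hsc := (hinv.mul (hid.inner ℝ hw)).const_mul 2
  have hv := (hw.sub (hsc.smul hid))
  have hv' : ∀ h : E3, fderiv ℝ (sphRefl u) x h = L h -
      ((2 * ((‖x‖ ^ 2)⁻¹ * inner ℝ x (u (sphereInv x)))) • h +
        (2 * ((‖x‖ ^ 2)⁻¹ * (inner ℝ x (L h) + inner ℝ h (u (sphereInv x)))
          + inner ℝ x (u (sphereInv x)) * (-((‖x‖ ^ 2) ^ 2)⁻¹ * (2 * inner ℝ x h)))) • x) := by
    intro h
    rw [sphRefl_eq]
    have e := congrArg (fun T : E3 →L[ℝ] E3 => T h) hv.fderiv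
    exact e.trans (by simp [fderivInnerCLM_apply]; congr 1; ring)
  have hxs : ∑ i, x i ^ 2 = ‖x‖ ^ 2 := by rw [EuclideanSpace.real_norm_sq_eq]
  have hws : ∑ i, u (sphereInv x) i ^ 2 = 1 := by
    rw [← EuclideanSpace.real_norm_sq_eq, hn]; norm_num
  have main := alg_identity (fun i j => L (EuclideanSpace.single j 1) i) (jac (sphRefl u) x)
    x (u (sphereInv x)) (sphRefl u x) (‖x‖ ^ 2) hs0 hxs hws ?_ ?_
  · have hfrob : ∑ i, ∑ j, (L (EuclideanSpace.single j 1) i) ^ 2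
        = (‖x‖ ^ 4)⁻¹ * frobSq u (sphereInv x) := by
      have hLe : ∀ i j, L (EuclideanSpace.single j 1) i = (‖x‖ ^ 2)⁻¹ *
          (jac u (sphereInv x) i j - 2 * (‖x‖ ^ 2)⁻¹ * x j *
            ∑ k, jac u (sphereInv x) i k * x k) := by
        intro i j
        have hdec : ∀ v : E3, v = ∑ k, v k • EuclideanSpace.single k (1 : ℝ) := by
          intro v; ext i; fin_cases i <;> simp [Fin.sum_univ_three]
        have hD : ∀ v : E3, fderiv ℝ u (sphereInv x) v i
            = ∑ k, jac u (sphereInv x) i k * v k := by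
          intro v
          conv_lhs => rw [hdec v]
          simp [jac, Fin.sum_univ_three]
          ring
        rw [hL, ContinuousLinearMap.comp_apply, hD]
        simp only [invDeriv_apply, EuclideanSpace.inner_single_right]
        fin_cases j <;> simp [Fin.sum_univ_three] <;> ring
      simp only [hLe]
      exact frob_alg (jac u (sphereInv x)) x ‖x‖ hx0 hxs
    rw [hfrob] at main
    rw [invDeriv_det]
    simp only [frobSq, dot3, div3] at main ⊢
    have h4 : ‖x‖ ^ 4 = (‖x‖ ^ 2) ^ 2 := by ring
    rw [h4] at main ⊢
    rw [main]
    simp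
    field_simp
    ring
  · intro i
    rw [sphRefl_eq]
    simp only [PiLp.sub_apply, PiLp.smul_apply, smul_eq_mul, PiLp.inner_apply,
      Fin.sum_univ_three, RCLike.inner_apply, conj_trivial]
    ring
  · intro i j
    rw [jac]
    simp only [Matrix.of_apply]
    rw [hv']
    fin_cases i <;> fin_cases j <;> simp [PiLp.inner_apply, Fin.sum_univ_three] <;> ring

/-- The Dirichlet energy of `u` over the annulus `{1/2 < |x| < 1}` equals the
reflected exterior energy `Ẽ(ũ)` of the spherical reflection `ũ` over
`{1 < |x| < 2}`. -/
theorem dirichlet_energy_eq_reflected_energy (u : E3 → E3) (U : Set E3)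
    (hU : IsOpen U)
    (hsub : {x : E3 | 1 / 2 ≤ ‖x‖ ∧ ‖x‖ ≤ 1} ⊆ U)
    (hu : ContDiffOn ℝ 1 u U)
    (hnorm : ∀ x : E3, 1 / 2 ≤ ‖x‖ → ‖x‖ ≤ 1 → ‖u x‖ = 1) :
    (1 / 2) * ∫ x in {x : E3 | 1 / 2 < ‖x‖ ∧ ‖x‖ < 1}, frobSq u x =
      4 * π + (1 / 2) * ∫ x in {x : E3 | 1 < ‖x‖ ∧ ‖x‖ < 2},
        (1 / ‖x‖ ^ 2) *
          (frobSq (sphRefl u) x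
            + (4 / ‖x‖ ^ 4) * (dot3 (sphRefl u x) x) ^ 2
            + (4 / ‖x‖ ^ 2) * ∑ i, ∑ j, x i * (jac (sphRefl u) x i j) * sphRefl u x j
            - (4 / ‖x‖ ^ 2) * dot3 (sphRefl u x) x * div3 (sphRefl u) x) := by
  have hm : MeasurableSet {x : E3 | 1 < ‖x‖ ∧ ‖x‖ < 2} :=
    (measurableSet_lt measurable_const measurable_norm).inter
      (measurableSet_lt measurable_norm measurable_const)
  have hne : ∀ x ∈ {x : E3 | 1 < ‖x‖ ∧ ‖x‖ < 2}, x ≠ 0 := by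
    rintro x hx rfl
    have := hx.1
    simp at this
    linarith
  have hf' : ∀ x ∈ {x : E3 | 1 < ‖x‖ ∧ ‖x‖ < 2},
      HasFDerivWithinAt sphereInv (invDeriv x) {x : E3 | 1 < ‖x‖ ∧ ‖x‖ < 2} x :=
    fun x hx => (sphereInv_hasFDerivAt x (hne x hx)).hasFDerivWithinAt
  have hinj : Set.InjOn sphereInv {x : E3 | 1 < ‖x‖ ∧ ‖x‖ < 2} := by
    intro a _ b _ hab
    rw [← sphereInv_sphereInv a, hab, sphereInv_sphereInv]
  -- integrability on the inner annulus
  have hcont : ContinuousOn (frobSq u) U := by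
    have hfd : ContinuousOn (fderiv ℝ u) U := hu.continuousOn_fderiv_of_isOpen hU le_rfl
    unfold frobSq jac
    simp only [Matrix.of_apply]
    refine continuousOn_finsetSum _ fun i _ => continuousOn_finsetSum _ fun j _ => ?_
    refine ContinuousOn.pow ?_ 2
    have h1 : ContinuousOn (fun x => fderiv ℝ u x (EuclideanSpace.single j 1)) U :=
      hfd.clm_apply continuousOn_const
    exact (EuclideanSpace.proj (𝕜 := ℝ) i).continuous.comp_continuousOn h1
  have hK : IsCompact {x : E3 | 1 / 2 ≤ ‖x‖ ∧ ‖x‖ ≤ 1} := by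
    refine (isCompact_closedBall (0 : E3) 1).of_isClosed_subset ?_ ?_
    · exact (isClosed_le continuous_const continuous_norm).inter
        (isClosed_le continuous_norm continuous_const)
    · intro x hx
      simpa using hx.2
  have hint : IntegrableOn (frobSq u) {x : E3 | 1 / 2 < ‖x‖ ∧ ‖x‖ < 1} :=
    ((hcont.mono hsub).integrableOn_compact hK).mono_set
      fun x hx => ⟨hx.1.le, hx.2.le⟩
  rw [← image_annulus] at hint ⊢
  rw [integrableOn_image_iff_integrableOn_abs_det_fderiv_smul volume hm hf' hinj] at hint
  rw [integral_image_eq_integral_abs_det_fderiv_smul volume hm hf' hinj]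
  have hrad : IntegrableOn (fun x : E3 => (4 / ‖x‖ ^ 4 : ℝ))
      {x : E3 | 1 < ‖x‖ ∧ ‖x‖ < 2} := by
    by_contra h
    have h2 := radial_integral
    rw [integral_undef h] at h2
    linarith [Real.pi_pos]
  have hpt : ∀ x ∈ {x : E3 | 1 < ‖x‖ ∧ ‖x‖ < 2},
      |(invDeriv x).det| • frobSq u (sphereInv x) - 4 / ‖x‖ ^ 4 =
      (1 / ‖x‖ ^ 2) *
          (frobSq (sphRefl u) x
            + (4 / ‖x‖ ^ 4) * (dot3 (sphRefl u x) x) ^ 2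
            + (4 / ‖x‖ ^ 2) * ∑ i, ∑ j, x i * (jac (sphRefl u) x i j) * sphRefl u x j
            - (4 / ‖x‖ ^ 2) * dot3 (sphRefl u x) x * div3 (sphRefl u) x) := by
    intro x hx
    have hy : sphereInv x ∈ {x : E3 | 1 / 2 < ‖x‖ ∧ ‖x‖ < 1} :=
      image_annulus ▸ Set.mem_image_of_mem _ hx
    have hyU : sphereInv x ∈ U := hsub ⟨hy.1.le, hy.2.le⟩
    have hd : DifferentiableAt ℝ u (sphereInv x) :=
      (hu.differentiableOn one_ne_zero).differentiableAt (hU.mem_nhds hyU)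
    rw [pointwise u x (hne x hx) hd (hnorm _ hy.1.le hy.2.le)]
    ring
  rw [← setIntegral_congr_fun hm hpt, integral_sub hint hrad, radial_integral]
  ring
end
end

section
/- Define u₀ : ℝ³ → ℝ³ by u₀(x,y,z) := (−2zx, −2zy, x² + y² − z² + 1) / √(4z²(x² + y²) + (1 + x² + y² − z²)²), wherever the denominator is nonzero. Then: (i) for every point p = (x,y,z) of the closed unit ball with p ≠ (0,0,1) and p ≠ (0,0,−1), the denominator is nonzero and |u₀(p)| = 1; (ii) u₀(p) · p = 0 for every p on the unit sphere S² with p ≠ (0,0,±1). In particular u₀ is a unit vector field on the closed unit ball minus the two poles which is tangent to the boundary sphere. -/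
noncomputable section

open Real

/-- The denominator `√(4z²(x²+y²) + (1+x²+y²−z²)²)`. -/
def den (p : E3) : ℝ :=
  Real.sqrt (4 * (p 2) ^ 2 * ((p 0) ^ 2 + (p 1) ^ 2) +
    (1 + (p 0) ^ 2 + (p 1) ^ 2 - (p 2) ^ 2) ^ 2)

/-- The explicit competitor
`u₀(x,y,z) = (−2zx, −2zy, x²+y²−z²+1)/√(4z²(x²+y²)+(1+x²+y²−z²)²)`. -/
def u0 (p : E3) : E3 :=
  toE3 ![(-2 * p 2 * p 0) / den p, (-2 * p 2 * p 1) / den p,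
    ((p 0) ^ 2 + (p 1) ^ 2 - (p 2) ^ 2 + 1) / den p]

def northPole : E3 := toE3 ![0, 0, 1]
def southPole : E3 := toE3 ![0, 0, -1]

theorem norm_sq_E3 (p : E3) : ‖p‖ ^ 2 = p 0 ^ 2 + p 1 ^ 2 + p 2 ^ 2 := by
  rw [EuclideanSpace.norm_sq_eq]
  simp [Fin.sum_univ_three]

theorem third_pos (p : E3) (h : ‖p‖ ≤ 1) (hn : p ≠ northPole) (hs : p ≠ southPole) :
    0 < 1 + (p 0) ^ 2 + (p 1) ^ 2 - (p 2) ^ 2 := by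
  by_contra hc
  have h1 : ‖p‖ ^ 2 ≤ 1 := by nlinarith [norm_nonneg p]
  rw [norm_sq_E3] at h1
  have h0 : p 0 = 0 := by
    apply pow_eq_zero_iff (two_ne_zero) |>.mp
    nlinarith [sq_nonneg (p 0), sq_nonneg (p 1)]
  have h2 : p 1 = 0 := by
    apply pow_eq_zero_iff (two_ne_zero) |>.mp
    nlinarith [sq_nonneg (p 0), sq_nonneg (p 1)]
  have h3 : p 2 ^ 2 = 1 := by
    rw [h0, h2] at h1 hc
    linarith
  rcases (sq_eq_sq_iff_eq_or_eq_neg.mp (h3.trans (one_pow 2).symm)) with h4 | h4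
  · apply hn
    ext i
    fin_cases i <;> simp [northPole, toE3, h0, h2, h4]
  · apply hs
    ext i
    fin_cases i <;> simp [southPole, toE3, h0, h2, h4]

/-- On the closed unit ball minus the two poles, the denominator of `u₀` is
nonzero and `u₀` is a unit vector field; on the unit sphere minus the poles,
`u₀` is tangent to the sphere. -/
theorem u0_unit_and_tangent :
    (∀ p : E3, ‖p‖ ≤ 1 → p ≠ northPole → p ≠ southPole →
      den p ≠ 0 ∧ ‖u0 p‖ = 1) ∧
    (∀ p : E3, ‖p‖ = 1 → p ≠ northPole → p ≠ southPole →
      dot3 (u0 p) p = 0) := by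
  constructor
  · intro p h hn hs
    have h3 := third_pos p h hn hs
    have hpos : 0 < 4 * (p 2) ^ 2 * ((p 0) ^ 2 + (p 1) ^ 2) +
        (1 + (p 0) ^ 2 + (p 1) ^ 2 - (p 2) ^ 2) ^ 2 := by positivity
    have hd : den p ≠ 0 := (Real.sqrt_pos.mpr hpos).ne'
    have hsq : den p ^ 2 = _ := Real.sq_sqrt hpos.le
    refine ⟨hd, ?_⟩
    have : ‖u0 p‖ ^ 2 = 1 := by
      rw [norm_sq_E3]
      simp only [u0, toE3, PiLp.continuousLinearEquiv_symm_apply, Matrix.cons_val]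
      field_simp
      rw [hsq]
      ring
    nlinarith [norm_nonneg (u0 p)]
  · intro p h _ _
    have h1 := norm_sq_E3 p
    rw [h] at h1
    simp only [dot3, Fin.sum_univ_three, u0, toE3, PiLp.continuousLinearEquiv_symm_apply,
      Matrix.cons_val]
    have h2 : (p 0) ^ 2 = 1 - p 1 ^ 2 - p 2 ^ 2 := by linarith
    linear_combination (p 2 / den p) * h1
end
end

section
/- Let u₀ : ℝ³ → ℝ³ be defined by u₀(x,y,z) := (−2zx, −2zy, x² + y² − z² + 1) / √(4z²(x² + y²) + (1 + x² + y² − z²)²). Then u₀ is differentiable at every point p = (x,y,z) of the open unit ball, and, with ρ² := x² + y², the squared Frobenius norm of its Jacobian satisfies ‖Du₀(p)‖² = (4ρ² + 8z²) / (4z²ρ² + (1 + ρ² − z²)²), where the denominator equals ρ⁴ + 2ρ²z² + 2ρ² + z⁴ − 2z² + 1. -/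
noncomputable section

open Real

/-- Differential of the radicand. -/
def drad (p v : E3) : ℝ :=
  8 * p 2 * v 2 * ((p 0) ^ 2 + (p 1) ^ 2) + 4 * (p 2) ^ 2 * (2 * p 0 * v 0 + 2 * p 1 * v 1) +
    2 * (1 + (p 0) ^ 2 + (p 1) ^ 2 - (p 2) ^ 2) * (2 * p 0 * v 0 + 2 * p 1 * v 1 - 2 * p 2 * v 2)

theorem coord_hasFDerivAt (p : E3) (i : Fin 3) :
    HasFDerivAt (fun q : E3 => q i) (EuclideanSpace.proj i : E3 →L[ℝ] ℝ) p :=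
  (EuclideanSpace.proj i : E3 →L[ℝ] ℝ).hasFDerivAt

theorem rad_pos (p : E3) (hp : ‖p‖ < 1) :
    0 < 4 * (p 2) ^ 2 * ((p 0) ^ 2 + (p 1) ^ 2) +
    (1 + (p 0) ^ 2 + (p 1) ^ 2 - (p 2) ^ 2) ^ 2 := by
  have h : ‖p‖ ^ 2 < 1 := by nlinarith [norm_nonneg p]
  rw [EuclideanSpace.norm_sq_eq, Fin.sum_univ_three] at h
  simp only [Real.norm_eq_abs, sq_abs] at h
  have h1 : 0 < 1 + (p 0) ^ 2 + (p 1) ^ 2 - (p 2) ^ 2 := by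
    nlinarith [sq_nonneg (p 0), sq_nonneg (p 1)]
  positivity

theorem quot_deriv (p : E3) (hp : ‖p‖ < 1) (w : E3 → ℝ) (w' : E3 →L[ℝ] ℝ)
    (hw : HasFDerivAt w w' p) :
    ∃ L : E3 →L[ℝ] ℝ, HasFDerivAt (fun q => w q / den q) L p ∧
      ∀ v, L v = (w' v - w p * drad p v / (2 * den p ^ 2)) / den p := by
  have hpos := rad_pos p hp
  have h0 := coord_hasFDerivAt p 0
  have h1 := coord_hasFDerivAt p 1
  have h2 := coord_hasFDerivAt p 2
  have hS := ((((h2.pow 2).const_mul 4).mul ((h0.pow 2).add (h1.pow 2))).add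
    (((((h0.pow 2).const_add 1).add (h1.pow 2)).sub (h2.pow 2)).pow 2))
  have hd := hS.sqrt hpos.ne'
  have hdpos : 0 < den p := Real.sqrt_pos.mpr hpos
  have hd1 : HasFDerivAt den _ p := hd
  have hi := (hasDerivAt_inv hdpos.ne').comp_hasFDerivAt p hd1
  have hq := hw.mul hi
  refine ⟨_, hq.congr_of_eventuallyEq (Filter.Eventually.of_forall fun q => div_eq_mul_inv _ _), fun v => ?_⟩
  have hfold : √(4 * (p 2) ^ 2 * ((p 0) ^ 2 + (p 1) ^ 2) +
    (1 + (p 0) ^ 2 + (p 1) ^ 2 - (p 2) ^ 2) ^ 2) = den p := rfl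
  simp [drad, hfold]
  generalize den p = d at *
  field_simp
  ring

theorem comp_deriv (p : E3) (hp : ‖p‖ < 1) : ∃ L : E3 →L[ℝ] E3, HasFDerivAt u0 L p ∧
    ∀ v, L v 0 = ((-2 * p 2 * v 0 - 2 * v 2 * p 0) -
        (-2 * p 2 * p 0) * drad p v / (2 * den p ^ 2)) / den p ∧
      L v 1 = ((-2 * p 2 * v 1 - 2 * v 2 * p 1) -
        (-2 * p 2 * p 1) * drad p v / (2 * den p ^ 2)) / den p ∧
      L v 2 = ((2 * p 0 * v 0 + 2 * p 1 * v 1 - 2 * p 2 * v 2) -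
        ((p 0) ^ 2 + (p 1) ^ 2 - (p 2) ^ 2 + 1) * drad p v / (2 * den p ^ 2)) / den p := by
  have h0 := coord_hasFDerivAt p 0
  have h1 := coord_hasFDerivAt p 1
  have h2 := coord_hasFDerivAt p 2
  obtain ⟨A, hA, hA'⟩ := quot_deriv p hp (fun q => -2 * q 2 * q 0) _ ((h2.const_mul (-2)).mul h0)
  obtain ⟨B, hB, hB'⟩ := quot_deriv p hp (fun q => -2 * q 2 * q 1) _ ((h2.const_mul (-2)).mul h1)
  obtain ⟨C, hC, hC'⟩ := quot_deriv p hp (fun q => (q 0) ^ 2 + (q 1) ^ 2 - (q 2) ^ 2 + 1) _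
    ((((h0.pow 2).add (h1.pow 2)).sub (h2.pow 2)).add_const 1)
  have hpi : HasFDerivAt (fun q : E3 => (![(-2 * q 2 * q 0) / den q, (-2 * q 2 * q 1) / den q,
    ((q 0) ^ 2 + (q 1) ^ 2 - (q 2) ^ 2 + 1) / den q] : Fin 3 → ℝ))
      (ContinuousLinearMap.pi ![A, B, C]) p := by
    rw [hasFDerivAt_pi']
    intro i
    fin_cases i
    · exact hA
    · exact hB
    · exact hC
  refine ⟨_, ((EuclideanSpace.equiv (Fin 3) ℝ).symm.toContinuousLinearMap.hasFDerivAt).comp p hpi,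
    fun v => ⟨?_, ?_, ?_⟩⟩
  · refine (hA' v).trans ?_
    simp
    ring
  · refine (hB' v).trans ?_
    simp
    ring
  · refine (hC' v).trans ?_
    simp

/-- On the open unit ball, `u₀` is differentiable and
`‖Du₀‖² = (4ρ² + 8z²)/(4z²ρ² + (1+ρ²−z²)²)`, whose denominator equals
`ρ⁴ + 2ρ²z² + 2ρ² + z⁴ − 2z² + 1`. -/
theorem u0_energy_density (p : E3) (hp : ‖p‖ < 1) :
    DifferentiableAt ℝ u0 p ∧
    frobSq u0 p =
      (4 * ((p 0) ^ 2 + (p 1) ^ 2) + 8 * (p 2) ^ 2) /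
        (4 * (p 2) ^ 2 * ((p 0) ^ 2 + (p 1) ^ 2) +
          (1 + (p 0) ^ 2 + (p 1) ^ 2 - (p 2) ^ 2) ^ 2) ∧
    4 * (p 2) ^ 2 * ((p 0) ^ 2 + (p 1) ^ 2) +
        (1 + (p 0) ^ 2 + (p 1) ^ 2 - (p 2) ^ 2) ^ 2 =
      ((p 0) ^ 2 + (p 1) ^ 2) ^ 2 + 2 * ((p 0) ^ 2 + (p 1) ^ 2) * (p 2) ^ 2 +
        2 * ((p 0) ^ 2 + (p 1) ^ 2) + (p 2) ^ 4 - 2 * (p 2) ^ 2 + 1 := by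
  have hpos := rad_pos p hp
  obtain ⟨L, hL, hv⟩ := comp_deriv p hp
  refine ⟨hL.differentiableAt, ?_, by ring⟩
  have hd2 : den p ^ 2 = _ := Real.sq_sqrt hpos.le
  simp only [frobSq, jac, Matrix.of_apply, hL.fderiv, Fin.sum_univ_three, (hv _).1, (hv _).2.1,
    (hv _).2.2, div_pow, hd2, drad]
  have e00 : (EuclideanSpace.single (0 : Fin 3) (1 : ℝ) : E3) 0 = 1 := by simp
  have e01 : (EuclideanSpace.single (0 : Fin 3) (1 : ℝ) : E3) 1 = 0 := by simp
  have e02 : (EuclideanSpace.single (0 : Fin 3) (1 : ℝ) : E3) 2 = 0 := by simp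
  have e10 : (EuclideanSpace.single (1 : Fin 3) (1 : ℝ) : E3) 0 = 0 := by simp
  have e11 : (EuclideanSpace.single (1 : Fin 3) (1 : ℝ) : E3) 1 = 1 := by simp
  have e12 : (EuclideanSpace.single (1 : Fin 3) (1 : ℝ) : E3) 2 = 0 := by simp
  have e20 : (EuclideanSpace.single (2 : Fin 3) (1 : ℝ) : E3) 0 = 0 := by simp
  have e21 : (EuclideanSpace.single (2 : Fin 3) (1 : ℝ) : E3) 1 = 0 := by simp
  have e22 : (EuclideanSpace.single (2 : Fin 3) (1 : ℝ) : E3) 2 = 1 := by simp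
  simp only [e00, e01, e02, e10, e11, e12, e20, e21, e22]
  clear hv hL hd2 hp
  generalize p 0 = x at *
  generalize p 1 = y at *
  generalize p 2 = z at *
  generalize hS : 4 * z ^ 2 * (x ^ 2 + y ^ 2) + (1 + x ^ 2 + y ^ 2 - z ^ 2) ^ 2 = S at *
  have hne : S ≠ 0 := hpos.ne'
  field_simp
  rw [← hS]
  ring
end
end

section
/- Let u₀ : ℝ³ → ℝ³ be defined by u₀(x,y,z) := (−2zx, −2zy, x² + y² − z² + 1) / √(4z²(x² + y²) + (1 + x² + y² − z²)²). Then the Dirichlet energy of u₀ over the open unit ball B₁(0) ⊂ ℝ³ equals E(u₀) = (1/2)∫_{B₁(0)} ‖Du₀(p)‖² dp = 5π − π³/4; equivalently ∫_{B₁(0)} ‖Du₀‖² dp = 10π − π³/2. -/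
noncomputable section

open Real MeasureTheory

/-- The square of the denominator. -/
def Qf (x y z : ℝ) : ℝ := 4 * z ^ 2 * (x ^ 2 + y ^ 2) + (1 + x ^ 2 + y ^ 2 - z ^ 2) ^ 2

/-- The explicit energy density. -/
def Kf (x y z : ℝ) : ℝ := (4 * (x ^ 2 + y ^ 2) + 8 * z ^ 2) / Qf x y z

lemma Qf_pos {x y z : ℝ} (h : x ^ 2 + y ^ 2 + z ^ 2 < 1) : 0 < Qf x y z := by
  unfold Qf
  have h1 : 0 < 1 + x ^ 2 + y ^ 2 - z ^ 2 := by nlinarith [sq_nonneg x, sq_nonneg y]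
  positivity

lemma norm_lt_one_iff (p : E3) : ‖p‖ < 1 ↔ (p 0) ^ 2 + (p 1) ^ 2 + (p 2) ^ 2 < 1 := by
  rw [← sq_lt_one_iff₀ (norm_nonneg p), EuclideanSpace.norm_sq_eq]
  simp [Fin.sum_univ_three]

lemma Q_line (x y z a b c : ℝ) :
    HasDerivAt (fun t : ℝ => Qf (x + t * a) (y + t * b) (z + t * c))
      (8 * z * c * (x ^ 2 + y ^ 2) + 4 * z ^ 2 * (2 * x * a + 2 * y * b) +
        2 * (1 + x ^ 2 + y ^ 2 - z ^ 2) * (2 * x * a + 2 * y * b - 2 * z * c)) 0 := by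
  have hl : ∀ u v : ℝ, HasDerivAt (fun t : ℝ => u + t * v) v 0 := fun u v => by
    simpa using ((hasDerivAt_id (0 : ℝ)).mul_const v).const_add u
  have hx := (hl x a).fun_pow 2
  have hy := (hl y b).fun_pow 2
  have hz := (hl z c).fun_pow 2
  have h := ((hz.const_mul 4).fun_mul (hx.fun_add hy)).fun_add
    ((((hx.const_add 1).fun_add hy).fun_sub hz).fun_pow 2)
  convert! h using 1
  push_cast
  ring

lemma div_line {N Q : ℝ → ℝ} {N' Q' : ℝ} (hN : HasDerivAt N N' 0) (hQ : HasDerivAt Q Q' 0)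
    (h0 : 0 < Q 0) :
    (deriv (fun t => N t / √(Q t)) 0) ^ 2 = (2 * Q 0 * N' - N 0 * Q') ^ 2 / (4 * Q 0 ^ 3) := by
  have h := (hN.div (hQ.sqrt h0.ne') (by positivity))
  have h2 : deriv (fun t => N t / √(Q t)) 0 = _ := h.deriv
  rw [h2]
  obtain ⟨s, hs, hs2⟩ : ∃ s : ℝ, 0 < s ∧ Q 0 = s ^ 2 := ⟨√(Q 0), by positivity, by simp [h0.le]⟩
  rw [hs2, Real.sqrt_sq hs.le]
  field_simp
  ring

lemma u0_comp (p : E3) : u0 p 0 = (-2 * p 2 * p 0) / √(Qf (p 0) (p 1) (p 2)) ∧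
    u0 p 1 = (-2 * p 2 * p 1) / √(Qf (p 0) (p 1) (p 2)) ∧
    u0 p 2 = ((p 0) ^ 2 + (p 1) ^ 2 - (p 2) ^ 2 + 1) / √(Qf (p 0) (p 1) (p 2)) := by
  refine ⟨?_, ?_, ?_⟩ <;> simp [u0, toE3, den, Qf]

lemma u0_diff {p : E3} (hp : ‖p‖ < 1) : DifferentiableAt ℝ u0 p := by
  have hQ := Qf_pos ((norm_lt_one_iff p).1 hp)
  have hc : ∀ i, DifferentiableAt ℝ (fun q : E3 => q i) p := fun i =>
    (EuclideanSpace.proj (𝕜 := ℝ) i : E3 →L[ℝ] ℝ).differentiableAt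
  have h0 := hc 0
  have h1 := hc 1
  have h2 := hc 2
  have hD : DifferentiableAt ℝ (fun q : E3 => √(Qf (q 0) (q 1) (q 2))) p := by
    refine DifferentiableAt.sqrt ?_ hQ.ne'
    unfold Qf
    fun_prop
  have hne : √(Qf (p 0) (p 1) (p 2)) ≠ 0 := by positivity
  rw [differentiableAt_euclidean]
  intro i
  fin_cases i
  · have : (fun q => u0 q 0) = _ := funext fun q => (u0_comp q).1
    simp only [Fin.zero_eta, this]
    have hN : DifferentiableAt ℝ (fun q : E3 => -2 * q 2 * q 0) p := by fun_prop
    have hq := hN.fun_mul (hD.fun_inv hne)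
    simpa only [div_eq_mul_inv] using hq
  · have : (fun q => u0 q 1) = _ := funext fun q => (u0_comp q).2.1
    simp only [Fin.mk_one, this]
    have hN : DifferentiableAt ℝ (fun q : E3 => -2 * q 2 * q 1) p := by fun_prop
    have hq := hN.fun_mul (hD.fun_inv hne)
    simpa only [div_eq_mul_inv] using hq
  · have : (fun q => u0 q 2) = _ := funext fun q => (u0_comp q).2.2
    simp only [Fin.reduceFinMk, this]
    have hN : DifferentiableAt ℝ (fun q : E3 => (q 0) ^ 2 + (q 1) ^ 2 - (q 2) ^ 2 + 1) p := by fun_prop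
    have hq := hN.fun_mul (hD.fun_inv hne)
    simpa only [div_eq_mul_inv] using hq

lemma jac_eq {p : E3} (hp : ‖p‖ < 1) (i j : Fin 3) :
    jac u0 p i j = deriv (fun t : ℝ => u0 (p + t • EuclideanSpace.single j 1) i) 0 := by
  have hd := u0_diff hp
  have hi : HasFDerivAt (fun q => u0 q i)
      ((EuclideanSpace.proj (𝕜 := ℝ) i : E3 →L[ℝ] ℝ).comp (fderiv ℝ u0 p)) p :=
    (EuclideanSpace.proj (𝕜 := ℝ) i : E3 →L[ℝ] ℝ).hasFDerivAt.comp p hd.hasFDerivAt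
  have := hi.hasLineDerivAt (EuclideanSpace.single j 1)
  have h3 := HasDerivAt.deriv this
  rw [h3]
  rfl

lemma frob_eq {p : E3} (hp : ‖p‖ < 1) : frobSq u0 p = Kf (p 0) (p 1) (p 2) := by
  have hQ := Qf_pos ((norm_lt_one_iff p).1 hp)
  have hl : ∀ u v : ℝ, HasDerivAt (fun t : ℝ => u + t * v) v 0 := fun u v => by
    simpa using ((hasDerivAt_id (0 : ℝ)).mul_const v).const_add u
  have key : ∀ x y z a b c : ℝ, 0 < Qf x y z →
      (deriv (fun t : ℝ => (-2 * (z + t * c) * (x + t * a)) /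
        √(Qf (x + t * a) (y + t * b) (z + t * c))) 0) ^ 2 =
        (2 * Qf x y z * (-2 * c * x - 2 * z * a) - (-2 * z * x) *
          (8 * z * c * (x ^ 2 + y ^ 2) + 4 * z ^ 2 * (2 * x * a + 2 * y * b) +
        2 * (1 + x ^ 2 + y ^ 2 - z ^ 2) * (2 * x * a + 2 * y * b - 2 * z * c))) ^ 2
          / (4 * Qf x y z ^ 3) := by
    intro x y z a b c h
    have hN := ((hl z c).const_mul (-2)).fun_mul (hl x a)
    have := div_line hN (Q_line x y z a b c) (by simpa using h)
    rw [this]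
    simp
    ring
  have key1 : ∀ x y z a b c : ℝ, 0 < Qf x y z →
      (deriv (fun t : ℝ => (-2 * (z + t * c) * (y + t * b)) /
        √(Qf (x + t * a) (y + t * b) (z + t * c))) 0) ^ 2 =
        (2 * Qf x y z * (-2 * c * y - 2 * z * b) - (-2 * z * y) *
          (8 * z * c * (x ^ 2 + y ^ 2) + 4 * z ^ 2 * (2 * x * a + 2 * y * b) +
        2 * (1 + x ^ 2 + y ^ 2 - z ^ 2) * (2 * x * a + 2 * y * b - 2 * z * c))) ^ 2
          / (4 * Qf x y z ^ 3) := by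
    intro x y z a b c h
    have hN := ((hl z c).const_mul (-2)).fun_mul (hl y b)
    have := div_line hN (Q_line x y z a b c) (by simpa using h)
    rw [this]
    simp
    ring
  have key2 : ∀ x y z a b c : ℝ, 0 < Qf x y z →
      (deriv (fun t : ℝ => ((x + t * a) ^ 2 + (y + t * b) ^ 2 - (z + t * c) ^ 2 + 1) /
        √(Qf (x + t * a) (y + t * b) (z + t * c))) 0) ^ 2 =
        (2 * Qf x y z * (2 * x * a + 2 * y * b - 2 * z * c) - (x ^ 2 + y ^ 2 - z ^ 2 + 1) *
          (8 * z * c * (x ^ 2 + y ^ 2) + 4 * z ^ 2 * (2 * x * a + 2 * y * b) +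
        2 * (1 + x ^ 2 + y ^ 2 - z ^ 2) * (2 * x * a + 2 * y * b - 2 * z * c))) ^ 2
          / (4 * Qf x y z ^ 3) := by
    intro x y z a b c h
    have hN := ((((hl x a).fun_pow 2).fun_add ((hl y b).fun_pow 2)).fun_sub
      ((hl z c).fun_pow 2)).add_const 1
    have := div_line hN (Q_line x y z a b c) (by simpa using h)
    rw [this]
    simp
  have e0 := fun q => (u0_comp q).1
  have e1 := fun q => (u0_comp q).2.1
  have e2 := fun q => (u0_comp q).2.2
  have c0 : ∀ t : ℝ, ∀ q : E3, ∀ j, (q + t • EuclideanSpace.single j (1 : ℝ) : E3) 0 = q 0 + t * (if j = 0 then 1 else 0) := by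
    intro t q j; fin_cases j <;> simp
  have c1 : ∀ t : ℝ, ∀ q : E3, ∀ j, (q + t • EuclideanSpace.single j (1 : ℝ) : E3) 1 = q 1 + t * (if j = 1 then 1 else 0) := by
    intro t q j; fin_cases j <;> simp
  have c2 : ∀ t : ℝ, ∀ q : E3, ∀ j, (q + t • EuclideanSpace.single j (1 : ℝ) : E3) 2 = q 2 + t * (if j = 2 then 1 else 0) := by
    intro t q j; fin_cases j <;> simp
  unfold frobSq
  simp only [Fin.sum_univ_three, jac_eq hp, e0, e1, e2, c0, c1, c2, key _ _ _ _ _ _ hQ,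
    key1 _ _ _ _ _ _ hQ, key2 _ _ _ _ _ _ hQ]
  generalize p 0 = x at *
  generalize p 1 = y at *
  generalize p 2 = z at *
  simp only [Kf, ← add_div]
  rw [div_eq_div_iff (by positivity) (by positivity)]
  simp [Qf]
  ring


/-- The elementary part of the integrand in `z`. -/
def hf (z : ℝ) : ℝ :=
  2 * (2 * log 2 - log (1 + z) - log (1 - z)) + z * (log (1 + z) - log (1 - z))

/-- The dilogarithmic part of the integrand in `z`. -/
def Sf (z : ℝ) : ℝ := (log (1 + z) - log (1 - z)) / z

lemma hasSum_odd : HasSum (fun k : ℕ => 4 / (2 * (k : ℝ) + 1) ^ 2) (π ^ 2 / 2) := by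
  have h := hasSum_zeta_two
  have he : HasSum (fun k : ℕ => (1 : ℝ) / ((2 * k : ℕ) : ℝ) ^ 2) (1 / 4 * (π ^ 2 / 6)) := by
    have h' := h.mul_left (1 / 4)
    have e : (fun k : ℕ => (1 : ℝ) / ((2 * k : ℕ) : ℝ) ^ 2) =
        fun k : ℕ => 1 / 4 * ((1 : ℝ) / (k : ℝ) ^ 2) := by
      funext k
      push_cast
      rw [mul_pow, one_div_mul_one_div]
      norm_num
    rw [e]
    exact h'
  have hs : Summable (fun k : ℕ => (1 : ℝ) / ((2 * k + 1 : ℕ) : ℝ) ^ 2) :=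
    h.summable.comp_injective (i := fun k : ℕ => 2 * k + 1) (fun a b hab => by
      have hab' : 2 * a + 1 = 2 * b + 1 := hab
      omega)
  have ho := HasSum.even_add_odd (f := fun n : ℕ => (1 : ℝ) / (n : ℝ) ^ 2) he hs.hasSum
  have hu := ho.unique h
  have h3 : ∑' k : ℕ, (1 : ℝ) / ((2 * k + 1 : ℕ) : ℝ) ^ 2 = π ^ 2 / 8 := by linarith
  have h4 := hs.hasSum
  rw [h3] at h4
  have h5 := h4.mul_left 4
  have e : (fun k : ℕ => 4 / (2 * (k : ℝ) + 1) ^ 2) =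
      fun k : ℕ => 4 * ((1 : ℝ) / ((2 * k + 1 : ℕ) : ℝ) ^ 2) := by
    funext k
    push_cast
    ring
  rw [e, show π ^ 2 / 2 = 4 * (π ^ 2 / 8) by ring]
  exact h5

lemma S_int : IntegrableOn Sf (Set.Ioo (-1) 1) ∧ ∫ z in Set.Ioo (-1 : ℝ) 1, Sf z = π ^ 2 / 2 := by
  have hval : ∀ k : ℕ, ∫ z in Set.Ioo (-1 : ℝ) 1, 2 / (2 * (k : ℝ) + 1) * z ^ (2 * k)
      = 4 / (2 * (k : ℝ) + 1) ^ 2 := by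
    intro k
    rw [← integral_Ioc_eq_integral_Ioo, ← intervalIntegral.integral_of_le (by norm_num),
      intervalIntegral.integral_const_mul, integral_pow]
    have h : (-1 : ℝ) ^ (2 * k + 1) = -1 := by rw [pow_succ, pow_mul]; simp
    rw [h]
    push_cast
    field_simp
    norm_num
  have hsum := hasSum_integral_of_summable_integral_norm
    (μ := volume.restrict (Set.Ioo (-1 : ℝ) 1))
    (F := fun (k : ℕ) (z : ℝ) => 2 / (2 * (k : ℝ) + 1) * z ^ (2 * k))
    (fun k => by
      have : Continuous (fun z : ℝ => 2 / (2 * (k : ℝ) + 1) * z ^ (2 * k)) := by fun_prop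
      exact (this.integrableOn_Icc (a := -1) (b := 1)).mono_set Set.Ioo_subset_Icc_self)
    (by
      have : ∀ k : ℕ, ∫ z in Set.Ioo (-1 : ℝ) 1, ‖2 / (2 * (k : ℝ) + 1) * z ^ (2 * k)‖
        = 4 / (2 * (k : ℝ) + 1) ^ 2 := by
        intro k
        rw [← hval k]
        congr 1
        funext z
        rw [Real.norm_eq_abs, abs_of_nonneg]
        have : 0 ≤ z ^ (2 * k) := by rw [pow_mul]; positivity
        positivity
      simp only [this]
      exact hasSum_odd.summable)
  simp only [hval] at hsum
  have h1 := hsum.unique hasSum_odd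
  have h2 : ∫ z in Set.Ioo (-1 : ℝ) 1, Sf z = π ^ 2 / 2 := by
    rw [← h1]
    apply integral_congr_ae
    have hne : ∀ᵐ z : ℝ ∂(volume.restrict (Set.Ioo (-1 : ℝ) 1)), z ≠ 0 :=
      ae_restrict_of_ae (Measure.ae_ne volume 0)
    filter_upwards [hne, ae_restrict_mem measurableSet_Ioo] with z hz hm
    have hs := (hasSum_log_sub_log_of_abs_lt_one (abs_lt.2 ⟨hm.1, hm.2⟩)).div_const z
    rw [Sf, ← hs.tsum_eq]
    congr 1
    funext k
    field_simp
    ring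
  refine ⟨?_, h2⟩
  by_contra hc
  have := integral_undef hc
  rw [h2] at this
  have := Real.pi_pos
  nlinarith [this]

lemma h_int : IntegrableOn hf (Set.Ioo (-1) 1) ∧ ∫ z in Set.Ioo (-1 : ℝ) 1, hf z = 10 := by
  set H : ℝ → ℝ := fun z => 4 * log 2 * z - 2 * ((1 + z) * log (1 + z) - z) +
    2 * ((1 - z) * log (1 - z) + z) + ((z - 1) / 2 * ((1 + z) * log (1 + z)) +
      (z + 1) / 2 * ((1 - z) * log (1 - z))) + z with hH
  have hcont : Continuous H := by
    have hp : Continuous (fun z : ℝ => (1 + z) * log (1 + z)) :=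
      Real.continuous_mul_log.comp (by fun_prop : Continuous fun z : ℝ => 1 + z)
    have hm : Continuous (fun z : ℝ => (1 - z) * log (1 - z)) :=
      Real.continuous_mul_log.comp (by fun_prop : Continuous fun z : ℝ => 1 - z)
    fun_prop
  have hder : ∀ z ∈ Set.Ioo (-1 : ℝ) 1, HasDerivAt H (hf z) z := by
    intro z hz
    have h1 : (1 + z) ≠ 0 := by linarith [hz.1]
    have h2 : (1 - z) ≠ 0 := by linarith [hz.2]
    have i := hasDerivAt_id' z
    have lp := (i.const_add 1).log h1
    have lm := (i.const_sub 1).log h2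
    have ap := (i.const_add 1).fun_mul lp
    have am := (i.const_sub 1).fun_mul lm
    have := ((((i.const_mul (4 * log 2)).fun_sub ((ap.fun_sub i).const_mul 2)).fun_add
      ((am.fun_add i).const_mul 2)).fun_add ((((i.sub_const 1).div_const 2).fun_mul ap).fun_add
        (((i.add_const 1).div_const 2).fun_mul am))).fun_add i
    convert! this using 1
    unfold hf
    field_simp
    ring
  have hpos : ∀ z ∈ Set.Ioo (-1 : ℝ) 1, 0 ≤ hf z := by
    intro z hz
    have h1 : log (1 + z) ≤ log 2 := Real.log_le_log (by linarith [hz.1]) (by linarith [hz.2])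
    have h2 : log (1 - z) ≤ log 2 := Real.log_le_log (by linarith [hz.2]) (by linarith [hz.1])
    have h3 : 0 ≤ z * (log (1 + z) - log (1 - z)) := by
      rcases le_total 0 z with h | h
      · exact mul_nonneg h (sub_nonneg.2 (Real.log_le_log (by linarith [hz.2]) (by linarith)))
      · exact mul_nonneg_of_nonpos_of_nonpos h
          (sub_nonpos.2 (Real.log_le_log (by linarith [hz.1]) (by linarith)))
    unfold hf
    linarith
  have hi := intervalIntegral.integrableOn_deriv_of_nonneg hcont.continuousOn hder hpos
  refine ⟨hi.mono_set Set.Ioo_subset_Ioc_self, ?_⟩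
  rw [← integral_Ioc_eq_integral_Ioo, ← intervalIntegral.integral_of_le (by norm_num),
    intervalIntegral.integral_eq_sub_of_hasDerivAt_of_le (by norm_num) hcont.continuousOn hder
      ((intervalIntegrable_iff_integrableOn_Ioc_of_le (by norm_num)).2 hi)]
  simp only [hH]
  norm_num
  ring

lemma radial_int {z : ℝ} (hz : z ∈ Set.Ioo (-1 : ℝ) 1) (h0 : z ≠ 0) :
    ∫ r in (0 : ℝ)..√(1 - z ^ 2), r * ((4 * r ^ 2 + 8 * z ^ 2) /
      (4 * z ^ 2 * r ^ 2 + (1 + r ^ 2 - z ^ 2) ^ 2)) = (hf z - Sf z) / 2 := by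
  have ha : 0 < 1 + z := by linarith [hz.1]
  have hb : 0 < 1 - z := by linarith [hz.2]
  have hfac : ∀ r : ℝ, 4 * z ^ 2 * r ^ 2 + (1 + r ^ 2 - z ^ 2) ^ 2 =
    (r ^ 2 + (1 + z) ^ 2) * (r ^ 2 + (1 - z) ^ 2) := fun r => by ring
  simp only [hfac]
  have hpa : ∀ r : ℝ, 0 < r ^ 2 + (1 + z) ^ 2 := fun r => by positivity
  have hpb : ∀ r : ℝ, 0 < r ^ 2 + (1 - z) ^ 2 := fun r => by positivity
  have hder : ∀ r : ℝ, HasDerivAt (fun r : ℝ => (1 + 2 * z - z ^ 2) / (2 * z) *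
      log (r ^ 2 + (1 + z) ^ 2) - (1 - 2 * z - z ^ 2) / (2 * z) * log (r ^ 2 + (1 - z) ^ 2))
      (r * ((4 * r ^ 2 + 8 * z ^ 2) / ((r ^ 2 + (1 + z) ^ 2) * (r ^ 2 + (1 - z) ^ 2)))) r := by
    intro r
    have i := (hasDerivAt_id' r).fun_pow 2
    have l1 := ((i.add_const ((1 + z) ^ 2)).log (hpa r).ne').const_mul ((1 + 2 * z - z ^ 2) / (2 * z))
    have l2 := ((i.add_const ((1 - z) ^ 2)).log (hpb r).ne').const_mul ((1 - 2 * z - z ^ 2) / (2 * z))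
    convert! l1.fun_sub l2 using 1
    have e1 := (hpa r).ne'
    have e2 := (hpb r).ne'
    field_simp
    ring
  rw [intervalIntegral.integral_eq_sub_of_hasDerivAt (fun r _ => hder r)]
  · have hz2 : 0 ≤ 1 - z ^ 2 := by nlinarith
    rw [Real.sq_sqrt hz2]
    have q1 : 1 - z ^ 2 + (1 + z) ^ 2 = 2 * (1 + z) := by ring
    have q2 : 1 - z ^ 2 + (1 - z) ^ 2 = 2 * (1 - z) := by ring
    rw [q1, q2, Real.log_mul (by norm_num) ha.ne', Real.log_mul (by norm_num) hb.ne']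
    simp only [ne_eq, OfNat.ofNat_ne_zero, not_false_eq_true, zero_pow, zero_add, Real.log_pow]
    unfold hf Sf
    push_cast
    field_simp
    ring
  · apply Continuous.intervalIntegrable
    have : ∀ r : ℝ, (r ^ 2 + (1 + z) ^ 2) * (r ^ 2 + (1 - z) ^ 2) ≠ 0 := fun r =>
      (mul_pos (hpa r) (hpb r)).ne'
    fun_prop (disch := assumption)


lemma slice_int {z : ℝ} (hz : z ∈ Set.Ioo (-1 : ℝ) 1) (h0 : z ≠ 0) :
    0 ≤ hf z - Sf z ∧
    ∫⁻ q : ℝ × ℝ, (if q.1 ^ 2 + q.2 ^ 2 + z ^ 2 < 1 then ENNReal.ofReal (Kf q.1 q.2 z) else 0) =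
      ENNReal.ofReal (π * (hf z - Sf z)) := by
  set k : ℝ → ℝ := fun r => r * ((4 * r ^ 2 + 8 * z ^ 2) /
      (4 * z ^ 2 * r ^ 2 + (1 + r ^ 2 - z ^ 2) ^ 2)) with hk
  have hR : 0 < 1 - z ^ 2 := by nlinarith [hz.1, hz.2]
  have hkpos : ∀ r, 0 ≤ r → 0 ≤ k r := fun r hr => by
    simp only [hk]; positivity
  have hkc : Continuous k := by
    have : ∀ r : ℝ, 4 * z ^ 2 * r ^ 2 + (1 + r ^ 2 - z ^ 2) ^ 2 ≠ 0 := fun r => by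
      have : 0 < 1 + r ^ 2 - z ^ 2 := by nlinarith [sq_nonneg r]
      positivity
    simp only [hk]
    fun_prop (disch := assumption)
  have hrad := radial_int hz h0
  have hnn : 0 ≤ hf z - Sf z := by
    have : 0 ≤ ∫ r in (0 : ℝ)..√(1 - z ^ 2), k r :=
      intervalIntegral.integral_nonneg (Real.sqrt_nonneg _) fun r hr => hkpos r hr.1
    rw [hrad] at this
    linarith
  refine ⟨hnn, ?_⟩
  set w : ℝ → ENNReal := fun r => if r ^ 2 + z ^ 2 < 1 then ENNReal.ofReal (k r) else 0 with hw
  have hwm : Measurable w := by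
    apply Measurable.ite
    · exact measurableSet_lt (by fun_prop) (by fun_prop)
    · exact hkc.measurable.ennreal_ofReal
    · exact measurable_const
  rw [← lintegral_comp_polarCoord_symm]
  have hT : polarCoord.target = Set.Ioi (0 : ℝ) ×ˢ Set.Ioo (-π) π := rfl
  have step1 : ∫⁻ p in polarCoord.target, ENNReal.ofReal p.1 •
      (fun q : ℝ × ℝ => if q.1 ^ 2 + q.2 ^ 2 + z ^ 2 < 1 then ENNReal.ofReal (Kf q.1 q.2 z) else 0)
        (polarCoord.symm p) = ∫⁻ p in Set.Ioi (0 : ℝ) ×ˢ Set.Ioo (-π) π, w p.1 := by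
    rw [hT]
    apply setLIntegral_congr_fun (measurableSet_Ioi.prod measurableSet_Ioo)
    intro p hp
    have hp1 : 0 < p.1 := hp.1
    have e : (p.1 * cos p.2) ^ 2 + (p.1 * sin p.2) ^ 2 = p.1 ^ 2 := by
      linear_combination p.1 ^ 2 * Real.sin_sq_add_cos_sq p.2
    have e2 : 1 + (p.1 * cos p.2) ^ 2 + (p.1 * sin p.2) ^ 2 - z ^ 2 = 1 + p.1 ^ 2 - z ^ 2 := by
      linear_combination p.1 ^ 2 * Real.sin_sq_add_cos_sq p.2
    simp only [polarCoord_symm_apply, Kf, Qf, e, e2, hw, hk, smul_eq_mul, mul_ite, mul_zero]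
    rw [ENNReal.ofReal_mul hp1.le]
  refine step1.trans ?_
  have step2 : ∫⁻ p in Set.Ioi (0 : ℝ) ×ˢ Set.Ioo (-π) π, w p.1 =
      (∫⁻ r in Set.Ioi (0 : ℝ), w r) * ENNReal.ofReal (2 * π) := by
    rw [Measure.volume_eq_prod, ← Measure.prod_restrict,
      lintegral_prod (fun p : ℝ × ℝ => w p.1) (hwm.comp measurable_fst).aemeasurable]
    simp only [lintegral_const, Measure.restrict_apply MeasurableSet.univ, Set.univ_inter,
      Real.volume_Ioo]
    rw [lintegral_mul_const _ hwm]
    congr 2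
    ring
  have step3 : ∫⁻ r in Set.Ioi (0 : ℝ), w r =
      ∫⁻ r in Set.Ioo (0 : ℝ) (√(1 - z ^ 2)), ENNReal.ofReal (k r) := by
    rw [← lintegral_indicator measurableSet_Ioi, ← lintegral_indicator measurableSet_Ioo]
    congr 1
    funext r
    by_cases hr : 0 < r
    · have hiff : r ^ 2 + z ^ 2 < 1 ↔ r < √(1 - z ^ 2) := by
        rw [Real.lt_sqrt hr.le]
        constructor <;> intro h <;> linarith
      by_cases h2 : r < √(1 - z ^ 2)
      · simp [Set.indicator, hw, hr, h2, hiff.2 h2]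
      · have h3 : ¬ (r ^ 2 + z ^ 2 < 1) := fun h => h2 (hiff.1 h)
        simp [Set.indicator, hw, h2, h3]
    · simp [Set.indicator, hr]
  have hki : IntegrableOn k (Set.Ioo (0 : ℝ) (√(1 - z ^ 2))) :=
    (hkc.integrableOn_Icc).mono_set Set.Ioo_subset_Icc_self
  rw [step2, step3, ← ofReal_integral_eq_lintegral_ofReal hki
    ((ae_restrict_mem measurableSet_Ioo).mono fun r hr => hkpos r hr.1.le),
    ← integral_Ioc_eq_integral_Ioo, ← intervalIntegral.integral_of_le (Real.sqrt_nonneg _), hrad,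
    ← ENNReal.ofReal_mul (by linarith)]
  congr 1
  ring

lemma total_int :
    ∫⁻ z : ℝ, ∫⁻ q : ℝ × ℝ,
      (if q.1 ^ 2 + q.2 ^ 2 + z ^ 2 < 1 then ENNReal.ofReal (Kf q.1 q.2 z) else 0) =
      ENNReal.ofReal (10 * π - π ^ 3 / 2) := by
  have hi : IntegrableOn (fun z => π * (hf z - Sf z)) (Set.Ioo (-1) 1) :=
    (h_int.1.sub S_int.1).const_mul π
  have hne : ∀ᵐ z : ℝ, z ≠ 0 := Measure.ae_ne volume 0
  have e : ∫ z in Set.Ioo (-1 : ℝ) 1, π * (hf z - Sf z) = 10 * π - π ^ 3 / 2 := by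
    rw [integral_const_mul, integral_sub h_int.1 S_int.1, h_int.2, S_int.2]
    ring
  rw [← e, ofReal_integral_eq_lintegral_ofReal hi]
  · rw [← lintegral_indicator measurableSet_Ioo]
    apply lintegral_congr_ae
    filter_upwards [hne] with z h0
    by_cases hz : z ∈ Set.Ioo (-1 : ℝ) 1
    · rw [Set.indicator_of_mem hz]
      exact (slice_int hz h0).2
    · rw [Set.indicator_of_notMem hz]
      have : 1 ≤ z ^ 2 := by
        by_contra hc
        exact hz (abs_lt.1 ((sq_lt_one_iff_abs_lt_one z).1 (not_le.1 hc)))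
      have h2 : ∀ q : ℝ × ℝ, ¬ (q.1 ^ 2 + q.2 ^ 2 + z ^ 2 < 1) := fun q => by
        nlinarith [sq_nonneg q.1, sq_nonneg q.2]
      simp [h2]
  · filter_upwards [ae_restrict_of_ae hne, ae_restrict_mem measurableSet_Ioo] with z h0 hz
    exact mul_nonneg Real.pi_pos.le (slice_int hz h0).1

lemma Kf_meas : Measurable (fun t : ℝ × ℝ × ℝ =>
    if t.2.1 ^ 2 + t.2.2 ^ 2 + t.1 ^ 2 < 1 then ENNReal.ofReal (Kf t.2.1 t.2.2 t.1) else 0) := by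
  apply Measurable.ite
  · exact measurableSet_lt (by fun_prop) (by fun_prop)
  · unfold Kf Qf
    fun_prop
  · exact measurable_const

lemma main_int : ∫ p in {p : E3 | ‖p‖ < 1}, frobSq u0 p = 10 * π - π ^ 3 / 2 := by
  have hset : MeasurableSet {p : E3 | ‖p‖ < 1} := measurableSet_lt (by fun_prop) (by fun_prop)
  have hKm : Measurable (fun p : E3 => Kf (p 0) (p 1) (p 2)) := by
    unfold Kf Qf
    fun_prop
  have e0 : ∫ p in {p : E3 | ‖p‖ < 1}, frobSq u0 p =
      ∫ p in {p : E3 | ‖p‖ < 1}, Kf (p 0) (p 1) (p 2) :=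
    setIntegral_congr_fun hset fun p hp => frob_eq hp
  rw [e0, integral_eq_lintegral_of_nonneg_ae
    (Filter.Eventually.of_forall fun p => by simp only [Kf, Qf, Pi.zero_apply]; positivity)
    hKm.aestronglyMeasurable, ← lintegral_indicator hset]
  set G : ℝ × ℝ × ℝ → ENNReal := fun t =>
    if t.2.1 ^ 2 + t.2.2 ^ 2 + t.1 ^ 2 < 1 then ENNReal.ofReal (Kf t.2.1 t.2.2 t.1) else 0 with hG
  have e1 : ({p : E3 | ‖p‖ < 1}.indicator fun p => ENNReal.ofReal (Kf (p 0) (p 1) (p 2))) =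
      fun p : E3 => G (p 2, p 0, p 1) := by
    funext p
    simp only [hG, Set.indicator, Set.mem_ofPred_eq, norm_lt_one_iff]
  have m1 := EuclideanSpace.volume_preserving_symm_measurableEquiv_toLp (Fin 3)
  have m2 := volume_preserving_piFinSuccAbove (fun _ : Fin 3 => ℝ) 2
  have m3 : MeasurePreserving (Prod.map (id : ℝ → ℝ) (MeasurableEquiv.finTwoArrow (α := ℝ)))
      ((volume : Measure ℝ).prod volume) ((volume : Measure ℝ).prod volume) :=
    (MeasurePreserving.id volume).prod (volume_preserving_finTwoArrow ℝ)
  have m : MeasurePreserving (fun p : E3 => ((p 2, p 0, p 1) : ℝ × ℝ × ℝ)) := m3.comp (m2.comp m1)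
  rw [e1, m.lintegral_comp Kf_meas, Measure.volume_eq_prod, lintegral_prod _ Kf_meas.aemeasurable]
  have := total_int
  simp only [hG]
  rw [this, ENNReal.toReal_ofReal]
  have h1 := Real.pi_pos
  have h2 := Real.pi_lt_four
  nlinarith [mul_pos h1 h1, mul_nonneg h1.le (mul_nonneg (by linarith : 0 ≤ 4 - π) (by linarith : 0 ≤ 4 + π))]

theorem u0_energy :
    (1 / 2) * ∫ p in {p : E3 | ‖p‖ < 1}, frobSq u0 p =
      5 * π - π ^ 3 / 4 ∧
    ∫ p in {p : E3 | ‖p‖ < 1}, frobSq u0 p = 10 * π - π ^ 3 / 2 := by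
  refine ⟨?_, main_int⟩
  rw [main_int]
  ring
end
end

section
/- Let f : ℝ² → ℝ, Φ : ℝ² → ℝ², and (t₀,c₀) ∈ ℝ². Assume: Φ is differentiable at (t₀,c₀); f is differentiable at Φ(t₀,c₀); the partial derivative in the first variable satisfies ∂_tΦ(t₀,c₀) = (−∂₂f(Φ(t₀,c₀)), ∂₁f(Φ(t₀,c₀))) (i.e. it equals the rotated gradient ∇⊥f at Φ(t₀,c₀)); and f(Φ(t₀,c)) = c for all c in a neighborhood of c₀. Then the Jacobian determinant of Φ at (t₀,c₀), i.e. det[∂_tΦ(t₀,c₀) | ∂_cΦ(t₀,c₀)], equals −1. -/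
noncomputable section

open Real Filter

/-- Level-set coordinates have Jacobian determinant `−1`: if
`Φ(t,c)` parametrizes the level sets of `f` (so `f(Φ(t₀,c)) = c` near `c₀`)
and `∂ₜΦ(t₀,c₀)` equals the rotated gradient `∇⊥f = (−∂₂f, ∂₁f)` at
`Φ(t₀,c₀)`, then `det[∂ₜΦ | ∂꜀Φ](t₀,c₀) = −1`. -/
theorem level_set_jacobian (f : ℝ × ℝ → ℝ) (Φ : ℝ × ℝ → ℝ × ℝ)
    (t₀ c₀ : ℝ)
    (hΦ : DifferentiableAt ℝ Φ (t₀, c₀))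
    (hf : DifferentiableAt ℝ f (Φ (t₀, c₀)))
    (hflow : fderiv ℝ Φ (t₀, c₀) (1, 0) =
      (-(fderiv ℝ f (Φ (t₀, c₀)) (0, 1)), fderiv ℝ f (Φ (t₀, c₀)) (1, 0)))
    (hlevel : ∀ᶠ c in nhds c₀, f (Φ (t₀, c)) = c) :
    (fderiv ℝ Φ (t₀, c₀) (1, 0)).1 * (fderiv ℝ Φ (t₀, c₀) (0, 1)).2 -
      (fderiv ℝ Φ (t₀, c₀) (1, 0)).2 * (fderiv ℝ Φ (t₀, c₀) (0, 1)).1 = -1 := by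
  have h1 : HasDerivAt (fun c : ℝ => ((t₀, c) : ℝ × ℝ)) (0, 1) c₀ :=
    (hasDerivAt_const c₀ t₀).prodMk (hasDerivAt_id c₀)
  have h2 : HasDerivAt (fun c : ℝ => Φ (t₀, c)) (fderiv ℝ Φ (t₀, c₀) (0, 1)) c₀ :=
    HasFDerivAt.comp_hasDerivAt (f := fun c : ℝ => ((t₀, c) : ℝ × ℝ)) c₀ hΦ.hasFDerivAt h1
  have h3 : HasDerivAt (fun c : ℝ => f (Φ (t₀, c)))
      (fderiv ℝ f (Φ (t₀, c₀)) (fderiv ℝ Φ (t₀, c₀) (0, 1))) c₀ :=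
    HasFDerivAt.comp_hasDerivAt (f := fun c : ℝ => Φ (t₀, c)) c₀ hf.hasFDerivAt h2
  have h4 : HasDerivAt (fun c : ℝ => f (Φ (t₀, c))) 1 c₀ :=
    (hasDerivAt_id c₀).congr_of_eventuallyEq hlevel
  have h5 := h3.unique h4
  rw [hflow]
  generalize fderiv ℝ Φ (t₀, c₀) (0, 1) = v at h5 ⊢
  generalize fderiv ℝ f (Φ (t₀, c₀)) = L at h5 ⊢
  have h6 : v = v.1 • ((1, 0) : ℝ × ℝ) + v.2 • ((0, 1) : ℝ × ℝ) := by
    ext <;> simp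
  rw [h6, map_add, map_smul, map_smul, smul_eq_mul, smul_eq_mul] at h5
  linear_combination -h5
end
end

section
/- Let b, c₁, c₂ ∈ ℝ with c₁ ≠ 0, let I ⊆ ℝ be an open interval, and let λ : I → ℝ be twice differentiable with λ(t) > 0 and λ(t) ≠ 6b/c₁ for all t ∈ I. Suppose that (c₂ + t)² = (1/c₁)·(λ(t) + 3b/c₁)·(λ(t) − 6b/c₁)² for all t ∈ I. Then λ satisfies the ordinary differential equation λ″(t) + λ′(t)²/(2λ(t)) + 2b/(3λ(t)³) = 0 for all t ∈ I. -/
noncomputable section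

open Real Set

/-- If `λ` is positive, avoids `6b/c₁`, and satisfies the implicit cubic
relation `(c₂+t)² = (1/c₁)(λ + 3b/c₁)(λ − 6b/c₁)²` on an open interval, then
it solves the ODE `λ″ + λ′²/(2λ) + 2b/(3λ³) = 0` there. -/
theorem implicit_cubic_solves_ode (b c₁ c₂ : ℝ) (hc₁ : c₁ ≠ 0)
    (p q : ℝ) (lam lam' lam'' : ℝ → ℝ)
    (hd1 : ∀ t ∈ Ioo p q, HasDerivAt lam (lam' t) t)
    (hd2 : ∀ t ∈ Ioo p q, HasDerivAt lam' (lam'' t) t)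
    (hpos : ∀ t ∈ Ioo p q, 0 < lam t)
    (hne : ∀ t ∈ Ioo p q, lam t ≠ 6 * b / c₁)
    (hrel : ∀ t ∈ Ioo p q,
      (c₂ + t) ^ 2 = (1 / c₁) * (lam t + 3 * b / c₁) * (lam t - 6 * b / c₁) ^ 2) :
    ∀ t ∈ Ioo p q,
      lam'' t + (lam' t) ^ 2 / (2 * lam t) + 2 * b / (3 * (lam t) ^ 3) = 0 := by
  obtain ⟨k, hk⟩ : ∃ k, k = b / c₁ := ⟨_, rfl⟩
  have hb : b = k * c₁ := by rw [hk]; field_simp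
  have h6 : 6 * b / c₁ = 6 * k := by rw [hk]; ring
  have h3 : 3 * b / c₁ = 3 * k := by rw [hk]; ring
  rw [h6] at hne
  rw [h6, h3] at hrel
  have hrel' : ∀ t ∈ Ioo p q,
      c₁ * (c₂ + t) ^ 2 = (lam t + 3 * k) * (lam t - 6 * k) ^ 2 := by
    intro t ht
    rw [hrel t ht]
    field_simp
  -- first derivative of the relation
  have e1 : ∀ t ∈ Ioo p q,
      c₁ * (2 * (c₂ + t)) = 3 * lam t * (lam t - 6 * k) * lam' t := by
    intro t ht
    have hL : HasDerivAt (fun t => c₁ * (c₂ + t) ^ 2) _ t :=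
      (((hasDerivAt_id t).const_add c₂).pow 2).const_mul c₁
    have hR : HasDerivAt (fun t => (lam t + 3 * k) * (lam t - 6 * k) ^ 2) _ t :=
      ((hd1 t ht).add_const (3 * k)).mul (((hd1 t ht).sub_const (6 * k)).pow 2)
    have hev : (fun t => c₁ * (c₂ + t) ^ 2) =ᶠ[nhds t]
        (fun t => (lam t + 3 * k) * (lam t - 6 * k) ^ 2) := by
      filter_upwards [isOpen_Ioo.mem_nhds ht] with x hx using hrel' x hx
    have := hL.unique (hR.congr_of_eventuallyEq hev)
    simp at this
    linear_combination this
  intro t ht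
  -- second derivative of the relation
  have e2 : 2 * c₁ = (6 * lam t - 18 * k) * lam' t ^ 2
      + 3 * lam t * (lam t - 6 * k) * lam'' t := by
    have hL : HasDerivAt (fun t => c₁ * (2 * (c₂ + t))) _ t :=
      (((hasDerivAt_id t).const_add c₂).const_mul 2).const_mul c₁
    have hR : HasDerivAt (fun t => 3 * lam t * (lam t - 6 * k) * lam' t) _ t :=
      (((hd1 t ht).const_mul 3).mul ((hd1 t ht).sub_const (6 * k))).mul (hd2 t ht)
    have hev : (fun t => c₁ * (2 * (c₂ + t))) =ᶠ[nhds t]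
        (fun t => 3 * lam t * (lam t - 6 * k) * lam' t) := by
      filter_upwards [isOpen_Ioo.mem_nhds ht] with x hx using e1 x hx
    have := hL.unique (hR.congr_of_eventuallyEq hev)
    simp at this
    linear_combination this
  have e0 := hrel' t ht
  have e1 := e1 t ht
  have hl := (hpos t ht).ne'
  have hn : lam t - 6 * k ≠ 0 := sub_ne_zero.mpr (hne t ht)
  generalize lam t = x at *
  generalize lam' t = y at *
  generalize lam'' t = z at *
  have f1 : 9 * x ^ 2 * y ^ 2 = 4 * c₁ * (x + 3 * k) := by
    apply mul_left_cancel₀ (pow_ne_zero 2 hn)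
    linear_combination (-(c₁ * (2 * (c₂ + t))) - 3 * x * (x - 6 * k) * y) * e1 + 4 * c₁ * e0
  have f2 : 9 * x ^ 3 * z = -2 * c₁ * (x + 6 * k) := by
    apply mul_left_cancel₀ hn
    linear_combination (-3 * x ^ 2) * e2 - (2 / 3) * (x - 3 * k) * 3 * f1
  rw [hb]
  field_simp
  linear_combination (2 / 3) * f2 + (1 / 3) * f1
end
end

section
/- Let ψ : (0,∞) × ℝ → ℝ be continuously differentiable and define u on ℝ³ minus the z-axis by u(p) := sin(ψ(ρ, z))·(x, y, 0)/ρ + cos(ψ(ρ, z))·(0,0,1), where p = (x, y, z) and ρ = √(x² + y²) > 0. Then u is differentiable at every such p and the squared Frobenius norm of its Jacobian equals ‖Du(p)‖² = (∂_ρψ(ρ,z))² + (∂_zψ(ρ,z))² + sin²(ψ(ρ,z))/ρ². -/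
noncomputable section

open Real

/-- Cylindrical radius `ρ = √(x² + y²)`. -/
def rad (p : E3) : ℝ := Real.sqrt ((p 0) ^ 2 + (p 1) ^ 2)

/-- The equivariant map `u = sin(ψ(ρ,z)) e_ρ + cos(ψ(ρ,z)) e_z`. -/
def uPsi (ψ : ℝ × ℝ → ℝ) (p : E3) : E3 :=
  toE3 ![Real.sin (ψ (rad p, p 2)) * p 0 / rad p,
         Real.sin (ψ (rad p, p 2)) * p 1 / rad p,
         Real.cos (ψ (rad p, p 2))]

/-- For `ψ : (0,∞) × ℝ → ℝ` continuously differentiable, the map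
`u = sin(ψ(ρ,z)) e_ρ + cos(ψ(ρ,z)) e_z` is differentiable off the `z`-axis and
`‖Du‖² = (∂_ρψ)² + (∂_zψ)² + sin²(ψ)/ρ²`. -/
theorem frobSq_equivariant_profile (ψ : ℝ × ℝ → ℝ)
    (hψ : ContDiffOn ℝ 1 ψ (Set.Ioi 0 ×ˢ (Set.univ : Set ℝ))) :
    ∀ p : E3, 0 < (p 0) ^ 2 + (p 1) ^ 2 →
      DifferentiableAt ℝ (uPsi ψ) p ∧
      frobSq (uPsi ψ) p =
        (fderiv ℝ ψ (rad p, p 2) (1, 0)) ^ 2 +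
          (fderiv ℝ ψ (rad p, p 2) (0, 1)) ^ 2 +
          Real.sin (ψ (rad p, p 2)) ^ 2 / rad p ^ 2 := by
  intro p hp
  have hr : 0 < rad p := Real.sqrt_pos.mpr hp
  have hr2 : rad p ^ 2 = (p 0) ^ 2 + (p 1) ^ 2 := Real.sq_sqrt hp.le
  let L : Fin 3 → (E3 →L[ℝ] ℝ) := fun i => EuclideanSpace.proj i
  have hL : ∀ i, HasFDerivAt (fun q : E3 => q i) (L i) p := fun i => (L i).hasFDerivAt
  have hLs : ∀ i j, L i (EuclideanSpace.single j 1) = if i = j then (1 : ℝ) else 0 := by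
    intro i j
    simp [L]
  set a := fderiv ℝ ψ (rad p, p 2) (1, 0) with ha
  set b := fderiv ℝ ψ (rad p, p 2) (0, 1) with hb
  have hρ : HasFDerivAt rad ((p 0 / rad p) • L 0 + (p 1 / rad p) • L 1) p := by
    have h := (((hL 0).pow 2).add ((hL 1).pow 2)).sqrt hp.ne'
    refine h.congr_fderiv ?_
    ext v
    change (1 / (2 * rad p)) * _ = _
    simp
    field_simp
  have hψd : HasFDerivAt ψ (fderiv ℝ ψ (rad p, p 2)) (rad p, p 2) := by
    have hm : (Set.Ioi (0 : ℝ) ×ˢ (Set.univ : Set ℝ)) ∈ nhds (rad p, p 2) :=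
      (isOpen_Ioi.prod isOpen_univ).mem_nhds ⟨hr, trivial⟩
    exact ((hψ.contDiffAt hm).differentiableAt (by norm_num)).hasFDerivAt
  have hg : HasFDerivAt (fun q : E3 => ψ (rad q, q 2))
      (a • ((p 0 / rad p) • L 0 + (p 1 / rad p) • L 1) + b • L 2) p := by
    have h := HasFDerivAt.comp p (f := fun q : E3 => (rad q, q 2)) hψd (hρ.prodMk (hL 2))
    refine h.congr_fderiv ?_
    ext v
    have key : ∀ s t : ℝ, fderiv ℝ ψ (rad p, p 2) (s, t) = s * a + t * b := by
      intro s t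
      have : ((s, t) : ℝ × ℝ) = s • (1, 0) + t • (0, 1) := by simp
      rw [this, map_add, map_smul, map_smul]
      simp [ha, hb]
    simp [key]
    ring
  set S := Real.sin (ψ (rad p, p 2)) with hS
  set C := Real.cos (ψ (rad p, p 2)) with hC
  have hSC : S ^ 2 + C ^ 2 = 1 := Real.sin_sq_add_cos_sq _
  set G := a • ((p 0 / rad p) • L 0 + (p 1 / rad p) • L 1) + b • L 2 with hG
  set R := (p 0 / rad p) • L 0 + (p 1 / rad p) • L 1 with hR
  have hc : ∀ i, HasFDerivAt (fun q : E3 => Real.sin (ψ (rad q, q 2)) * q i / rad q)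
      ((C * p i / rad p) • G + (S / rad p) • L i - (S * p i / rad p ^ 2) • R) p := by
    intro i
    have h := (hg.sin.mul (hL i)).mul ((hasDerivAt_inv hr.ne').comp_hasFDerivAt p hρ)
    refine h.congr_fderiv ?_
    ext v
    simp only [_root_.add_apply, _root_.sub_apply, Pi.mul_apply, Function.comp_apply,
      _root_.smul_apply, smul_eq_mul, ← hS, ← hC]
    field_simp
    try ring
  let M : Fin 3 → (E3 →L[ℝ] ℝ) := ![
    (C * p 0 / rad p) • G + (S / rad p) • L 0 - (S * p 0 / rad p ^ 2) • R,
    (C * p 1 / rad p) • G + (S / rad p) • L 1 - (S * p 1 / rad p ^ 2) • R,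
    (-S) • G]
  have hu : HasFDerivAt (uPsi ψ)
      (((EuclideanSpace.equiv (Fin 3) ℝ).symm : (Fin 3 → ℝ) →L[ℝ] E3).comp
        (ContinuousLinearMap.pi M)) p := by
    refine HasFDerivAt.comp p
      ((EuclideanSpace.equiv (Fin 3) ℝ).symm : (Fin 3 → ℝ) →L[ℝ] E3).hasFDerivAt ?_
    rw [hasFDerivAt_pi']
    intro i
    fin_cases i
    · exact hc 0
    · exact hc 1
    · exact hg.cos
  refine ⟨hu.differentiableAt, ?_⟩
  have hj : ∀ i j, jac (uPsi ψ) p i j = M i (EuclideanSpace.single j 1) := by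
    intro i j
    simp only [jac, Matrix.of_apply, hu.fderiv]
    rfl
  simp only [frobSq, hj, Fin.sum_univ_three]
  simp [M, hG, hR, hLs]
  obtain ⟨s, hs⟩ : ∃ s, s = p 0 / rad p := ⟨_, rfl⟩
  obtain ⟨t, ht⟩ : ∃ t, t = p 1 / rad p := ⟨_, rfl⟩
  obtain ⟨q, hq⟩ : ∃ q, q = S / rad p := ⟨_, rfl⟩
  have hN : s ^ 2 + t ^ 2 = 1 := by
    rw [hs, ht, div_pow, div_pow, ← add_div, ← hr2, div_self (pow_pos hr 2).ne']
  have e1 : C * p 0 / rad p = C * s := by rw [hs]; ring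
  have e2 : C * p 1 / rad p = C * t := by rw [ht]; ring
  have e3 : S * p 0 / rad p ^ 2 = q * s := by rw [hs, hq]; field_simp
  have e4 : S * p 1 / rad p ^ 2 = q * t := by rw [ht, hq]; field_simp
  have e5 : S ^ 2 / rad p ^ 2 = q ^ 2 := by rw [hq]; field_simp
  rw [e1, e2, e3, e4, e5, ← hs, ← ht, ← hq]
  linear_combination (C^2*a^2*(s^2+t^2+1) + C^2*b^2 + S^2*a^2 + q^2*(s^2+t^2-1)
    - 2*C*a*q*(s^2+t^2)) * hN + (a^2+b^2) * hSC
end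
end
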